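/- Let A and B be sets of m unordered points in ℝ^n with m ≤ 4. If PDD(A; m−1) = PDD(B; m−1) as multisets, then A and B are isometric. Thus the Pointwise Distance Distribution is a complete isometry invariant of all clouds of at most 4 unordered points in ℝ^n. -/

import Mathlib

/-!
The proof has a combinatorial part and a geometric part.

Combinatorics: matching equal rows of the two distributions enumerates `A` as `p i` and `B` as `q i`
so that the distances from `p i` and from `q i` agree as multisets for every `i`. For at most three
points this already determines all distances. For four points the distances form a weighting of
the edges of `K₄`; a pair of opposite edges has weight difference equal to half of an alternating
sum of row sums, so the two weightings differ by shifts `s, t, u` that are constant on the three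
pairs of opposite edges, with `s + t + u = 0`. If all shifts vanish, the weightings agree. If
exactly one vanishes, the weights outside the corresponding pair of opposite edges are forced and
the weightings are exchanged by a transposition of vertices. If none vanishes, each row is permuted
cyclically, opposite edges have equal weight, and a 3-cycle of vertices relates the weightings
(`edge_weights_of_rows`).

Geometry: a distance-preserving bijection between finite subsets of a Euclidean space extends to
an isometry of the space (`exists_isometryEquiv_of_dist_eq`). After moving a base point to the
origin, the two families have the same Gram matrix, so a linear isometry is defined on the span
of one of them, and it extends to the whole space.
-/

open scoped Classical in
/-- The Pointwise Distance Distribution `PDD(A; |A|-1)`: the multiset, indexed by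
the points `p ∈ A`, of the multisets of distances from `p` to all other points of `A`
(a multiset of distances determines the non-decreasingly ordered list and vice versa). -/
noncomputable def PDD {n : ℕ} (A : Finset (EuclideanSpace ℝ (Fin n))) :
    Multiset (Multiset ℝ) :=
  A.val.map fun p => (A.erase p).val.map fun q => dist p q

/-! ### Extending isometries between finite families -/

theorem norm_sum_smul_eq_of_inner_eq {E : Type*} [NormedAddCommGroup E] [InnerProductSpace ℝ E]
    {ι : Type*} [Fintype ι] {u v : ι → E} (h : ∀ i j, inner ℝ (u i) (u j) = inner ℝ (v i) (v j)) (c : ι → ℝ) :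
    ‖∑ i, c i • u i‖ = ‖∑ i, c i • v i‖ := by
  have : ‖∑ i, c i • u i‖ ^ 2 = ‖∑ i, c i • v i‖ ^ 2 := by
    simp only [← real_inner_self_eq_norm_sq, sum_inner, inner_sum, real_inner_smul_left,
      real_inner_smul_right, h]
  exact (sq_eq_sq₀ (norm_nonneg _) (norm_nonneg _)).1 this

/-- Families with the same Gram matrix are related by a linear isometry of the whole space. -/
theorem exists_linearIsometryEquiv_of_inner_eq {E : Type*} [NormedAddCommGroup E]
    [InnerProductSpace ℝ E] [FiniteDimensional ℝ E] {ι : Type*} [Fintype ι]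
    {u v : ι → E} (h : ∀ i j, inner ℝ (u i) (u j) = inner ℝ (v i) (v j)) :
    ∃ L : E ≃ₗᵢ[ℝ] E, ∀ i, L (u i) = v i := by
  classical
  let U := Fintype.linearCombination ℝ u
  let V := Fintype.linearCombination ℝ v
  have hUV : ∀ c, ‖U c‖ = ‖V c‖ := fun c => norm_sum_smul_eq_of_inner_eq h c
  obtain ⟨g, hg⟩ := U.rangeRestrict.exists_rightInverse_of_surjective U.range_rangeRestrict
  have hg' : ∀ y : U.range, U (g y) = y := fun y => congrArg Subtype.val (LinearMap.congr_fun hg y)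
  -- The map `∑ c i • u i ↦ ∑ c i • v i` on the span of `u`, with coefficients chosen by `g`; the
  -- choice is immaterial because `U` and `V` have the same kernel.
  let L : U.range →ₗᵢ[ℝ] E := ⟨V ∘ₗ g, fun y => by
    rw [LinearMap.comp_apply, ← hUV, hg']; rfl⟩
  refine ⟨L.extend.toLinearIsometryEquiv rfl, fun i => ?_⟩
  have hu : U (Pi.single i 1) = u i := by simp [U]
  have hv : V (Pi.single i 1) = v i := by simp [V]
  have e := L.extend_apply ⟨_, LinearMap.mem_range_self U (Pi.single i 1)⟩
  rw [LinearIsometry.toLinearIsometryEquiv_apply, ← hu, e, ← hv]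
  change V (g _) = V _
  rw [← sub_eq_zero, ← map_sub, ← norm_eq_zero, ← hUV, map_sub, hg', sub_self, norm_zero]

theorem exists_isometryEquiv_of_dist_eq {E : Type*} [NormedAddCommGroup E] [InnerProductSpace ℝ E]
    [FiniteDimensional ℝ E] {ι : Type*} [Fintype ι]
    {p q : ι → E} (h : ∀ i j, dist (p i) (p j) = dist (q i) (q j)) :
    ∃ f : E ≃ᵢ E, ∀ i, f (p i) = q i := by
  cases isEmpty_or_nonempty ι with
  | inl _ => exact ⟨IsometryEquiv.refl E, isEmptyElim⟩
  | inr hn =>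
    obtain ⟨o⟩ := hn
    obtain ⟨L, hL⟩ := exists_linearIsometryEquiv_of_inner_eq (u := fun i => p i - p o)
      (v := fun i => q i - q o) (by
      intro i j
      simp only [real_inner_eq_norm_mul_self_add_norm_mul_self_sub_norm_sub_mul_self_div_two,
        sub_sub_sub_cancel_right, ← dist_eq_norm, h])
    refine ⟨(IsometryEquiv.subRight (p o)).trans
      (L.toIsometryEquiv.trans (IsometryEquiv.addRight (q o))), fun i => ?_⟩
    simp [hL]

/-! ### Weightings of the complete graph on four vertices -/

/-- The triple `(a, b, c)` is a rearrangement of `(x, y, z)`. -/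
def IsRearrangement (a b c x y z : ℝ) : Prop :=
  (a = x ∧ b = y ∧ c = z) ∨ (a = x ∧ b = z ∧ c = y) ∨ (a = y ∧ b = x ∧ c = z) ∨
  (a = y ∧ b = z ∧ c = x) ∨ (a = z ∧ b = x ∧ c = y) ∨ (a = z ∧ b = y ∧ c = x)

theorem pair_cases {b c y z : ℝ} (h : ({b, c} : Multiset ℝ) = {y, z}) :
    (b = y ∧ c = z) ∨ (b = z ∧ c = y) := by
  have hb : b ∈ ({y, z} : Multiset ℝ) := h ▸ by simp
  simp only [Multiset.insert_eq_cons, Multiset.mem_cons, Multiset.mem_singleton] at hb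
  rcases hb with rfl | rfl
  · left; simpa [Multiset.insert_eq_cons] using h
  · right; rw [Multiset.pair_comm y] at h; simpa [Multiset.insert_eq_cons] using h

theorem IsRearrangement.of_multiset {a b c x y z : ℝ} (h : ({a, b, c} : Multiset ℝ) = {x, y, z}) :
    IsRearrangement a b c x y z := by
  unfold IsRearrangement
  have ha : a ∈ ({x, y, z} : Multiset ℝ) := h ▸ by simp
  simp only [Multiset.insert_eq_cons, Multiset.mem_cons, Multiset.mem_singleton] at ha h
  rcases ha with rfl | rfl | rfl
  · have := pair_cases ((Multiset.cons_inj_right _).1 h); tauto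
  · rw [Multiset.cons_swap x] at h
    have := pair_cases ((Multiset.cons_inj_right _).1 h); tauto
  · have e : x ::ₘ y ::ₘ {a} = a ::ₘ x ::ₘ {y} := by
      rw [← Multiset.insert_eq_cons y, Multiset.pair_comm, Multiset.insert_eq_cons,
        Multiset.cons_swap]
    rw [e] at h
    have := pair_cases ((Multiset.cons_inj_right _).1 h); tauto

theorem IsRearrangement.swap_right {a b c x y z : ℝ} (h : IsRearrangement a b c x y z) :
    IsRearrangement a c b x z y := by
  unfold IsRearrangement at *
  rcases h with h | h | h | h | h | h <;> simp [h]

theorem IsRearrangement.rotate {a b c x y z : ℝ} (h : IsRearrangement a b c x y z) :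
    IsRearrangement c a b z x y := by
  unfold IsRearrangement at *
  rcases h with h | h | h | h | h | h <;> simp [h]

/-- Comparing a triple with a rearrangement of it, entry by entry: either nothing moves, or two
entries are exchanged, or all three are permuted cyclically. -/
theorem IsRearrangement.shift {a b c s t u : ℝ} (h : IsRearrangement a b c (a + s) (b + t) (c + u)) :
    (s = 0 ∧ t = 0 ∧ u = 0) ∨ (s = 0 ∧ c = b + t ∧ b = c + u) ∨ (t = 0 ∧ c = a + s ∧ a = c + u) ∨
    (u = 0 ∧ b = a + s ∧ a = b + t) ∨
    (b = a + s ∧ c = b + t ∧ a = c + u) ∨ (c = a + s ∧ a = b + t ∧ b = c + u) := by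
  unfold IsRearrangement at h; grind

/-- The pairs of opposite edges of `K₄` carry the weights `(a, a')`, `(b, b')`, `(c, c')` in one
weighting and `(x, x')`, `(y, y')`, `(z, z')` in the other. If the weights at each vertex agree up
to order, the weightings agree up to the identity, a transposition or a 3-cycle of the vertices. -/
theorem edge_weights_of_rows {a a' b b' c c' x x' y y' z z' : ℝ}
    (hA : IsRearrangement a b c x y z) (hB : IsRearrangement a b' c' x y' z')
    (hC : IsRearrangement a' b c' x' y z') (hD : IsRearrangement a' b' c x' y' z) :
  (a = x ∧ a' = x' ∧ b = y ∧ b' = y' ∧ c = z ∧ c' = z') ∨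
  (a = x ∧ a' = x' ∧ b = z ∧ b' = z ∧ c = y ∧ c' = y ∧ y = y' ∧ z = z') ∨
  (b = y ∧ b' = y' ∧ a = z ∧ a' = z ∧ c = x ∧ c' = x ∧ x = x' ∧ z = z') ∨
  (c = z ∧ c' = z' ∧ b = x ∧ b' = x ∧ a = y ∧ a' = y ∧ y = y' ∧ x = x') ∨
  (a = y ∧ a' = y' ∧ b = z ∧ b' = z' ∧ c = x ∧ c' = x') ∨
  (a = z ∧ a' = z' ∧ b = x ∧ b' = x' ∧ c = y ∧ c' = y') := by
  obtain ⟨s, rfl⟩ : ∃ s, x = a + s := ⟨x - a, by ring⟩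
  obtain ⟨t, rfl⟩ : ∃ s, y = b + s := ⟨y - b, by ring⟩
  obtain ⟨u, rfl⟩ : ∃ s, z = c + s := ⟨z - c, by ring⟩
  have sum : ∀ {a b c x y z : ℝ}, IsRearrangement a b c x y z → a + b + c = x + y + z := by
    intro a b c x y z h
    rcases h with h | h | h | h | h | h <;> linarith [h.1, h.2.1, h.2.2]
  -- Alternating sums of the four rows: opposite edges change by the same shift.
  have e1 := sum hA
  have e2 := sum hB
  have e3 := sum hC
  have e4 := sum hD
  obtain rfl : x' = a' + s := by linarith
  obtain rfl : y' = b' + t := by linarith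
  obtain rfl : z' = c' + u := by linarith
  clear e2 e3 e4 sum
  have hA := hA.shift
  have hB := hB.shift
  have hC := hC.shift
  have hD := hD.shift
  by_cases hs : s = 0
  · by_cases ht : t = 0
    · left; refine ⟨?_, ?_, ?_, ?_, ?_, ?_⟩ <;> linarith
    · right; left
      have hu : u ≠ 0 := fun hu => ht (by linarith)
      have hA : c = b + t := by grind
      have hB : c' = b' + t := by grind
      have hC : c' = b + t := by grind
      have hD : c = b' + t := by grind
      refine ⟨?_, ?_, ?_, ?_, ?_, ?_, ?_, ?_⟩ <;> linarith
  by_cases ht : t = 0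
  · have hu : u ≠ 0 := fun hu => hs (by linarith)
    right; right; left
    have hA : c = a + s := by grind
    have hB : c' = a + s := by grind
    have hC : c' = a' + s := by grind
    have hD : c = a' + s := by grind
    refine ⟨?_, ?_, ?_, ?_, ?_, ?_, ?_, ?_⟩ <;> linarith
  by_cases hu : u = 0
  · right; right; right; left
    have hA : b = a + s := by grind
    have hB : b' = a + s := by grind
    have hC : b = a' + s := by grind
    have hD : b' = a' + s := by grind
    refine ⟨?_, ?_, ?_, ?_, ?_, ?_, ?_, ?_⟩ <;> linarith
  -- All rows are permuted cyclically; rows turning in opposite directions would make a shift vanish.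
  right; right; right; right
  simp only [hs, ht, hu, false_and, false_or] at hA hB hC hD
  rcases hA with hA | hA <;> rcases hB with hB | hB <;> rcases hC with hC | hC <;>
    rcases hD with hD | hD <;> grind

/-! ### Clouds of points -/

/-- If `A` and `B` are enumerated by families with equal pairwise distances, an isometry of the
space maps `A` onto `B`. -/
theorem exists_image_eq {n k : ℕ} {A B : Finset (EuclideanSpace ℝ (Fin n))}
    (p q : Fin k → EuclideanSpace ℝ (Fin n))
    (hA : (A : Set (EuclideanSpace ℝ (Fin n))) = Set.range p)
    (hB : (B : Set (EuclideanSpace ℝ (Fin n))) = Set.range q)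
    (h : ∀ i j, i < j → dist (p i) (p j) = dist (q i) (q j)) :
    ∃ f : EuclideanSpace ℝ (Fin n) ≃ᵢ EuclideanSpace ℝ (Fin n),
      f '' ↑A = (↑B : Set (EuclideanSpace ℝ (Fin n))) := by
  obtain ⟨f, hf⟩ := exists_isometryEquiv_of_dist_eq (p := p) (q := q) (by
    intro i j
    rcases lt_trichotomy i j with hij | rfl | hij
    · exact h i j hij
    · simp
    · rw [dist_comm, h j i hij, dist_comm])
  refine ⟨f, ?_⟩
  rw [hA, hB, ← Set.range_comp]
  congr 1
  exact funext hf

/-- PDD is a complete isometry invariant of clouds of `m ≤ 4`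
unordered points in `ℝⁿ`. -/
theorem stmt_3 {n m : ℕ} (hm : m ≤ 4) (A B : Finset (EuclideanSpace ℝ (Fin n)))
    (hA : A.card = m) (hB : B.card = m)
    (hPDD : PDD A = PDD B) :
    ∃ f : EuclideanSpace ℝ (Fin n) ≃ᵢ EuclideanSpace ℝ (Fin n),
      f '' ↑A = (↑B : Set (EuclideanSpace ℝ (Fin n))) := by
  classical
  unfold PDD at hPDD
  rw [← Multiset.rel_eq, Multiset.rel_map] at hPDD
  simp only [Finset.erase_val] at hPDD
  have hAn := A.nodup
  have hBn := B.nodup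
  have hAm : ∀ x, x ∈ (A : Set (EuclideanSpace ℝ (Fin n))) ↔ x ∈ A.val := fun x => Iff.rfl
  have hBm : ∀ x, x ∈ (B : Set (EuclideanSpace ℝ (Fin n))) ↔ x ∈ B.val := fun x => Iff.rfl
  rw [← Finset.card_val] at hA
  obtain ⟨l, hl⟩ := Quot.exists_rep A.val
  replace hl : A.val = (l : Multiset _) := hl.symm
  rw [hl] at hAn hA hPDD hAm
  rw [Multiset.coe_card] at hA
  -- `Multiset.Rel` enumerates `B` so that the `i`-th rows of both distributions agree.
  rcases l with _ | ⟨p0, _ | ⟨p1, _ | ⟨p2, _ | ⟨p3, _ | ⟨p4, l⟩⟩⟩⟩⟩ <;>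
    simp only [Multiset.coe_nil, ← Multiset.cons_coe, Multiset.rel_cons_left,
      Multiset.rel_zero_left] at hPDD
  · rw [hPDD] at hBm
    refine exists_image_eq ![] ![] ?_ ?_ (fun i => i.elim0) <;> ext x
    · simp [hAm]
    · simp [hBm]
  · obtain ⟨q0, _, r0, rfl, hq⟩ := hPDD
    rw [hq] at hBm
    refine exists_image_eq ![p0] ![q0] ?_ ?_ (fun i j hij => by omega) <;> ext x
    · simp [hAm, eq_comm]
    · simp [hBm, eq_comm]
  · obtain ⟨q0, _, r0, ⟨q1, _, r1, rfl, rfl⟩, hq⟩ := hPDD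
    rw [hq] at hBm r0
    simp at r0
    refine exists_image_eq ![p0, p1] ![q0, q1] ?_ ?_ ?_
    · ext x; simp [hAm]; grind
    · ext x; simp [hBm]; grind
    · simp [Fin.forall_fin_succ, r0]
  · obtain ⟨q0, _, r0, ⟨q1, _, r1, ⟨q2, _, r2, rfl, rfl⟩, rfl⟩, hq⟩ := hPDD
    rw [hq] at hBm hBn r0 r1 r2
    simp only [Multiset.coe_nodup, List.nodup_cons, List.mem_cons, List.not_mem_nil, or_false,
      Multiset.nodup_cons, Multiset.mem_cons, Multiset.notMem_zero, not_or] at hAn hBn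
    simp [hAn, hBn] at r0 r1 r2
    have c0 := pair_cases r0
    have c1 := pair_cases r1
    have c2 := pair_cases r2
    simp only [dist_comm p1 p0, dist_comm p2 p0, dist_comm p2 p1, dist_comm q1 q0,
      dist_comm q2 q0, dist_comm q2 q1] at c0 c1 c2
    have h01 : dist p0 p1 = dist q0 q1 := by grind
    have h02 : dist p0 p2 = dist q0 q2 := by grind
    have h12 : dist p1 p2 = dist q1 q2 := by grind
    refine exists_image_eq ![p0, p1, p2] ![q0, q1, q2] ?_ ?_ ?_
    · ext x; simp [hAm]; grind
    · ext x; simp [hBm]; grind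
    · simp [Fin.forall_fin_succ, h01, h02, h12]
  · obtain ⟨q0, _, r0, ⟨q1, _, r1, ⟨q2, _, r2, ⟨q3, _, r3, rfl, rfl⟩, rfl⟩, rfl⟩, hq⟩ := hPDD
    rw [hq] at hBm hBn r0 r1 r2 r3
    simp only [Multiset.coe_nodup, List.nodup_cons, List.mem_cons, List.not_mem_nil, or_false,
      Multiset.nodup_cons, Multiset.mem_cons, Multiset.notMem_zero, not_or] at hAn hBn
    simp [hAn, hBn] at r0 r1 r2 r3
    have c0 := IsRearrangement.of_multiset r0
    have c1 := IsRearrangement.of_multiset r1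
    have c2 := IsRearrangement.of_multiset r2
    have c3 := IsRearrangement.of_multiset r3
    simp only [dist_comm p1 p0, dist_comm p2 p0, dist_comm p2 p1, dist_comm p3 p0, dist_comm p3 p1,
      dist_comm p3 p2, dist_comm q1 q0, dist_comm q2 q0, dist_comm q2 q1, dist_comm q3 q0,
      dist_comm q3 q1, dist_comm q3 q2] at c0 c1 c2 c3
    have key := edge_weights_of_rows (a := dist p0 p1) (a' := dist p2 p3) (b := dist p0 p2)
      (b' := dist p1 p3) (c := dist p0 p3) (c' := dist p1 p2) (x := dist q0 q1)
      (x' := dist q2 q3) (y := dist q0 q2) (y' := dist q1 q3) (z := dist q0 q3)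
      (z' := dist q1 q2) c0 c1.swap_right c2.rotate c3.rotate.swap_right
    -- The enumeration of `B` is rearranged by the permutation belonging to each case.
    rcases key with h | h | h | h | h | h
    · refine exists_image_eq ![p0, p1, p2, p3] ![q0, q1, q2, q3] ?_ ?_ ?_
      · ext x; simp [hAm]; grind
      · ext x; simp [hBm]; grind
      · simp [Fin.forall_fin_succ]; grind [dist_comm]
    · refine exists_image_eq ![p0, p1, p2, p3] ![q0, q1, q3, q2] ?_ ?_ ?_
      · ext x; simp [hAm]; grind
      · ext x; simp [hBm]; grind
      · simp [Fin.forall_fin_succ]; grind [dist_comm]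
    · refine exists_image_eq ![p0, p1, p2, p3] ![q0, q3, q2, q1] ?_ ?_ ?_
      · ext x; simp [hAm]; grind
      · ext x; simp [hBm]; grind
      · simp [Fin.forall_fin_succ]; grind [dist_comm]
    · refine exists_image_eq ![p0, p1, p2, p3] ![q0, q2, q1, q3] ?_ ?_ ?_
      · ext x; simp [hAm]; grind
      · ext x; simp [hBm]; grind
      · simp [Fin.forall_fin_succ]; grind [dist_comm]
    · refine exists_image_eq ![p0, p1, p2, p3] ![q0, q2, q3, q1] ?_ ?_ ?_
      · ext x; simp [hAm]; grind
      · ext x; simp [hBm]; grind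
      · simp [Fin.forall_fin_succ]; grind [dist_comm]
    · refine exists_image_eq ![p0, p1, p2, p3] ![q0, q3, q1, q2] ?_ ?_ ?_
      · ext x; simp [hAm]; grind
      · ext x; simp [hBm]; grind
      · simp [Fin.forall_fin_succ]; grind [dist_comm]
  · simp at hA; omega
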